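/- arXiv:1111.0650 — 4 statements merged into one kernel-verified Lean document; each statement's English description precedes it below -/
import Mathlib

section
/- Let y = σ^ω(a) be the fixed point of a primitive substitution σ : A* → A* prolongable on a, let ρ : A* → B* be a morphism such that x = ρ(y) is an infinite sequence. Then x is substitutive with respect to a primitive substitution: there exist a finite alphabet D, a primitive substitution τ : D* → D* prolongable on a letter e ∈ D, and a coding χ : D* → B* such that x = χ(τ^ω(e)). -/
/-! The morphism `ρ` may erase letters, but `ρ(y) = ρ(σᵏ(y))`, and if every `σᵏ(b)` contains
every letter then `ρ ∘ σᵏ` erases none, since `ρ(y)` is infinite. So assume `ρ` nonerasing.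

Let `D` be the set of pairs `(b, p)` with `p < |ρ(b)|`, let `ψ(b) = (b,0)(b,1)⋯(b,|ρ(b)|-1)`, and
let `χ(b, p)` be the `p`-th letter of `ρ(b)`, so that `χ ∘ ψ = ρ`. For `n` large, `|σⁿ(b)| > |ρ(b)|`
for every `b`, so `σⁿ(b)` can be cut into `|ρ(b)|` nonempty words `s(b,0) s(b,1) ⋯`, the first of
length at least two (`exists_cut`). Put `τ(b,p) = ψ(s(b,p))`. Then `τ ∘ ψ = ψ ∘ σⁿ`, hence `z = ψ(y)`
is a fixed point of `τ` and `χ(z) = x`. Moreover `τᵐ⁺¹(b,p) = ψ(σⁿᵐ(s(b,p)))`, from which both the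
primitivity of `τ` and the growth of `|τᵐ(a,0)|` follow from the same properties of `σ`. -/

namespace Rauzy

variable {A B Γ : Type*}

/-- The factor `x_[i, i+n)` of length `n` of the sequence `x`, starting at position `i`. -/
def factorAt (x : ℕ → A) (i n : ℕ) : List A :=
  (List.range n).map fun k => x (i + k)

/-- The word `w` occurs in the sequence `x` at position `i`. -/
def OccursAt (x : ℕ → A) (w : List A) (i : ℕ) : Prop :=
  factorAt x i w.length = w

/-- The word `w` is a factor of the sequence `x`. -/
def IsFactor (x : ℕ → A) (w : List A) : Prop :=
  ∃ i, OccursAt x w i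

/-- The word `w` is a prefix of the sequence `x`. -/
def IsPrefixSeq (x : ℕ → A) (w : List A) : Prop :=
  OccursAt x w 0

/-- The sequence `x` is uniformly recurrent: every factor occurs with bounded gaps. -/
def UniformlyRecurrent (x : ℕ → A) : Prop :=
  ∀ w : List A, IsFactor x w → ∃ N, ∀ i, ∃ j, i ≤ j ∧ j < i + N ∧ OccursAt x w j

/-- `i < j` are two successive occurrences of `u` in `x`. -/
def SuccessiveOccs (x : ℕ → A) (u : List A) (i j : ℕ) : Prop :=
  i < j ∧ OccursAt x u i ∧ OccursAt x u j ∧ ∀ k, i < k → k < j → ¬ OccursAt x u k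

/-- The word `w` is a return word to `u` in `x`. -/
def IsReturnWord (x : ℕ → A) (u w : List A) : Prop :=
  ∃ i j, SuccessiveOccs x u i j ∧ w = factorAt x i (j - i)

/-- The set `ℛ_{x,u}` of return words to `u` in `x`. -/
def returnWords (x : ℕ → A) (u : List A) : Set (List A) :=
  {w | IsReturnWord x u w}

/-- The next occurrence of `u` in `x` strictly after position `i`. -/
noncomputable def nextOcc (x : ℕ → A) (u : List A) (i : ℕ) : ℕ :=
  sInf {j | i < j ∧ OccursAt x u j}

/-- The increasing enumeration of the occurrences of the prefix `u` in `x`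
(position `0` is an occurrence since `u` is a prefix). -/
noncomputable def occSeq (x : ℕ → A) (u : List A) : ℕ → ℕ
  | 0 => 0
  | n + 1 => nextOcc x u (occSeq x u n)

/-- The `n`-th return word `mₙ` in the decomposition `x = m₀m₁m₂⋯` of `x`
into return words to the prefix `u`. -/
noncomputable def retWord (x : ℕ → A) (u : List A) (n : ℕ) : List A :=
  factorAt x (occSeq x u n) (occSeq x u (n + 1) - occSeq x u n)

/-- The first index `n` such that `mₙ = w` in the decomposition of `x` into
return words to `u`. -/
noncomputable def firstIdx (x : ℕ → A) (u w : List A) : ℕ :=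
  sInf {n | retWord x u n = w}

open Classical in
/-- The derived sequence `D_u(x)` of `x` on the prefix `u`, with the return words
labelled `0, 1, 2, …` in the order of their first appearance in the decomposition
`x = m₀m₁m₂⋯` : the label of `mₙ` is the number of distinct return words appearing
strictly before the first occurrence of `mₙ`. -/
noncomputable def derivedSeq (x : ℕ → A) (u : List A) (n : ℕ) : ℕ :=
  ((Finset.range (firstIdx x u (retWord x u n))).image (retWord x u)).card

/-- The alphabet `R_{x,u} = {0, …, #ℛ_{x,u} - 1} ⊆ ℕ` of the derived sequence. -/
def derivedAlphabet (x : ℕ → A) (u : List A) : Set ℕ :=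
  Set.range (derivedSeq x u)

/-- The morphism `Θ_{x,u}` on letters: the return word labelled `k`. -/
noncomputable def thetaLetter (x : ℕ → A) (u : List A) (k : ℕ) : List A :=
  retWord x u (sInf {n | derivedSeq x u n = k})

/-- The canonical extension of a letter-to-word map to a monoid morphism on words. -/
def apply (f : A → List B) (w : List A) : List B :=
  (w.map f).flatten

/-- The morphism `Θ_{x,u} : R_{x,u}* → A*` on words. -/
noncomputable def theta (x : ℕ → A) (u : List A) (l : List ℕ) : List A :=
  apply (thetaLetter x u) l

/-- `y = f(x)` for an infinite sequence `x`: the image under `f` of every prefix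
of `x` is a prefix of `y`. -/
def SeqImage (f : A → List B) (x : ℕ → A) (y : ℕ → B) : Prop :=
  ∀ n, IsPrefixSeq y (apply f (factorAt x 0 n))

/-- The iterate `σⁿ` of a substitution, on letters. -/
def substIter (σ : A → List A) : ℕ → A → List A
  | 0 => fun a => [a]
  | n + 1 => fun a => apply σ (substIter σ n a)

/-- `σ` is prolongable on the letter `a`: `σ(a) = a·w` with `w` nonempty, and
`|σⁿ(a)| → ∞`. -/
def Prolongable (σ : A → List A) (a : A) : Prop :=
  (∃ w : List A, w ≠ [] ∧ σ a = a :: w) ∧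
    Filter.Tendsto (fun n => (substIter σ n a).length) Filter.atTop Filter.atTop

/-- The incidence matrix of a substitution: entry `(i, j)` is the number of
occurrences of the letter `i` in `σ(j)`. -/
def incMatrix [Fintype A] [DecidableEq A] (σ : A → List A) : Matrix A A ℕ :=
  Matrix.of fun i j => (σ j).count i

/-- A substitution is primitive if some power of its incidence matrix has all
entries strictly positive. -/
def Primitive [Fintype A] [DecidableEq A] (σ : A → List A) : Prop :=
  ∃ k, 0 < k ∧ ∀ i j, 0 < (incMatrix σ ^ k) i j

/-- The sequence `x` is (purely) periodic. -/
def IsPeriodic (x : ℕ → A) : Prop :=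
  ∃ p, 0 < p ∧ ∀ n, x (n + p) = x n

/-- The sequence `x` is ultimately periodic. -/
def IsUltimatelyPeriodic (x : ℕ → A) : Prop :=
  ∃ N p, 0 < p ∧ ∀ n, N ≤ n → x (n + p) = x n

/-- `|σ| = max_{a ∈ A} |σ(a)|`. -/
def mSize [Fintype A] (σ : A → List A) : ℕ :=
  Finset.univ.sup fun a => (σ a).length

/-- `min_{a ∈ A} |σ(a)|`. -/
noncomputable def minSize [Fintype A] [Nonempty A] (σ : A → List A) : ℕ :=
  Finset.univ.inf' Finset.univ_nonempty fun a => (σ a).length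

/-- `R_σ`: the maximal difference between two successive occurrences of a word of
length 2 in any fixed point of `σ`. -/
noncomputable def Rconst (σ : A → List A) : ℕ :=
  sSup {r | ∃ x : ℕ → A, SeqImage σ x x ∧
    ∃ w i j, w.length = 2 ∧ SuccessiveOccs x w i j ∧ r = j - i}

/-- `Q_σ = max( max_{0 ≤ n ≤ (d−1)d^d + 1} |σⁿ| / min_{a∈A} |σⁿ(a)| , |σ| )`. -/
noncomputable def Qconst [Fintype A] [Nonempty A] (σ : A → List A) : ℝ :=
  max
    ((Finset.range ((Fintype.card A - 1) * Fintype.card A ^ Fintype.card A + 2)).sup'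
      (Finset.nonempty_range_iff.mpr (by omega))
      fun n => (mSize (substIter σ n) : ℝ) / (minSize (substIter σ n) : ℝ))
    (mSize σ : ℝ)

/-- `K_σ = Q_σ · R_σ · |σ|`. -/
noncomputable def Kconst [Fintype A] [Nonempty A] (σ : A → List A) : ℝ :=
  Qconst σ * Rconst σ * mSize σ

/-- The index `m` such that `occSeq x u m = L`, i.e. the number of complete return
words to `u` composing the prefix of length `L` of `x`. -/
noncomputable def posIdx (x : ℕ → A) (u : List A) (L : ℕ) : ℕ :=
  sInf {m | occSeq x u m = L}

/-- The return substitution `σ_u : R_{x,u}* → R_{x,u}*`, on letters: it is the unique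
substitution satisfying `Θ_{x,u} ∘ σ_u = σ ∘ Θ_{x,u}`. -/
noncomputable def returnSubst (σ : A → List A) (x : ℕ → A) (u : List A) (k : ℕ) : List ℕ :=
  let n := sInf {n | derivedSeq x u n = k}
  let p := posIdx x u (apply σ (factorAt x 0 (occSeq x u n))).length
  let q := posIdx x u (apply σ (factorAt x 0 (occSeq x u (n + 1)))).length
  (List.range (q - p)).map fun t => derivedSeq x u (p + t)

/-- For a coding `φ`, the morphism `λ_u : R_{x,u}* → R_{φ(x),φ(u)}*`, on letters:
it is the unique morphism satisfying `φ ∘ Θ_{x,u} = Θ_{φ(x),φ(u)} ∘ λ_u`. -/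
noncomputable def lambdaMorph (φ : A → B) (x : ℕ → A) (u : List A) (k : ℕ) : List ℕ :=
  let n := sInf {n | derivedSeq x u n = k}
  let p := posIdx (fun i => φ (x i)) (u.map φ) (occSeq x u n)
  let q := posIdx (fun i => φ (x i)) (u.map φ) (occSeq x u (n + 1))
  (List.range (q - p)).map fun t => derivedSeq (fun i => φ (x i)) (u.map φ) (p + t)

/-- The Parikh vector (abelianization) of a word. -/
def parikh [DecidableEq A] (w : List A) : A → ℤ :=
  fun b => (w.count b : ℤ)


/-! ### Morphisms on words and on sequences -/

section Words

variable {A B C : Type*}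

lemma apply_nil (f : A → List B) : apply f [] = [] := rfl

lemma apply_cons (f : A → List B) (c : A) (w : List A) : apply f (c :: w) = f c ++ apply f w := by
  simp [apply]

lemma apply_append (f : A → List B) (u v : List A) :
    apply f (u ++ v) = apply f u ++ apply f v := by
  simp [apply]

lemma apply_singleton (f : A → List B) (c : A) : apply f [c] = f c := by
  simp [apply]

lemma apply_apply (f : B → List C) (g : A → List B) (w : List A) :
    apply f (apply g w) = apply (fun c => apply f (g c)) w := by
  induction w with
  | nil => rfl
  | cons c w ih => rw [apply_cons, apply_append, ih, apply_cons]

lemma apply_flatten (f : A → List B) (W : List (List A)) :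
    apply f W.flatten = (W.map (apply f)).flatten := by
  induction W with
  | nil => rfl
  | cons u W ih => simp [apply_append, ih]

lemma mem_apply {f : A → List B} {w : List A} {b : B} :
    b ∈ apply f w ↔ ∃ c ∈ w, b ∈ f c := by
  simp [apply]

lemma apply_prefix (f : A → List B) {u v : List A} (h : u <+: v) : apply f u <+: apply f v := by
  obtain ⟨t, rfl⟩ := h
  exact ⟨apply f t, (apply_append f u t).symm⟩

lemma length_le_apply {f : A → List B} (hf : ∀ c, f c ≠ []) (w : List A) :
    w.length ≤ (apply f w).length := by
  induction w with
  | nil => simp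
  | cons c w ih =>
    have := List.length_pos_iff.2 (hf c)
    rw [apply_cons, List.length_append, List.length_cons]
    omega

lemma length_apply_le_of_mem (f : A → List B) {w : List A} {c : A} (h : c ∈ w) :
    (f c).length ≤ (apply f w).length := by
  obtain ⟨u, v, rfl⟩ := List.append_of_mem h
  rw [apply_append, apply_cons]
  simp only [List.length_append]
  omega

lemma substIter_add (σ : A → List A) (m n : ℕ) (c : A) :
    substIter σ (m + n) c = apply (substIter σ m) (substIter σ n c) := by
  induction m with
  | zero =>
    have h : ∀ w : List A, apply (substIter σ 0) w = w := fun w => by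
      induction w with
      | nil => rfl
      | cons c w ih => rw [apply_cons, ih]; rfl
    rw [h, Nat.zero_add]
  | succ m ih =>
    rw [Nat.succ_add]
    change apply σ (substIter σ (m + n) c) = _
    rw [ih, apply_apply]
    rfl

lemma substIter_one (σ : A → List A) (c : A) : substIter σ 1 c = σ c := apply_singleton σ c

lemma substIter_succ_right (σ : A → List A) (n : ℕ) (c : A) :
    substIter σ (n + 1) c = apply (substIter σ n) (σ c) := by
  rw [substIter_add, substIter_one]

lemma factorAt_length (x : ℕ → A) (i n : ℕ) : (factorAt x i n).length = n := by
  simp [factorAt]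

lemma factorAt_prefix (x : ℕ → A) {m n : ℕ} (h : m ≤ n) :
    factorAt x 0 m <+: factorAt x 0 n := by
  obtain ⟨d, rfl⟩ := Nat.exists_eq_add_of_le h
  rw [factorAt, factorAt, List.range_add, List.map_append]
  exact List.prefix_append _ _

lemma isPrefixSeq_iff {x : ℕ → A} {w : List A} :
    IsPrefixSeq x w ↔ ∀ i (h : i < w.length), w[i] = x i := by
  unfold IsPrefixSeq OccursAt
  constructor
  · intro h i hi
    have : (factorAt x 0 w.length)[i]'(by rwa [factorAt_length]) = w[i] := by simp only [h]
    rw [← this]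
    simp [factorAt]
  · intro h
    apply List.ext_getElem (factorAt_length _ _ _)
    intro i h1 h2
    rw [h i h2]
    simp [factorAt]

lemma IsPrefixSeq.of_prefix {x : ℕ → A} {u v : List A} (hv : IsPrefixSeq x v) (h : u <+: v) :
    IsPrefixSeq x u := by
  rw [isPrefixSeq_iff] at *
  intro i hi
  rw [h.getElem hi]
  exact hv i _

/-- The image of a sequence under a composition of morphisms. -/
lemma SeqImage.comp {f : B → List C} {g : A → List B} {x : ℕ → A} {y : ℕ → B} {z : ℕ → C}
    (hg : SeqImage g x y) (hf : SeqImage f y z) : SeqImage (fun c => apply f (g c)) x z := by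
  intro n
  rw [← apply_apply, ← show factorAt y 0 _ = _ from hg n]
  exact hf _

lemma SeqImage.substIter {σ : A → List A} {y : ℕ → A} (h : SeqImage σ y y) (n : ℕ) :
    SeqImage (substIter σ n) y y := by
  induction n with
  | zero =>
    intro m
    have : apply (Rauzy.substIter σ 0) (factorAt y 0 m) = factorAt y 0 m := by
      change ((factorAt y 0 m).map fun c => [c]).flatten = _
      rw [← List.flatMap_def, List.flatMap_singleton']
    rw [this, IsPrefixSeq, OccursAt, factorAt_length]
  | succ n ih => exact ih.comp h

/-- The image of an infinite sequence under a nonerasing morphism. -/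
lemma exists_seqImage {f : A → List B} (hf : ∀ c, f c ≠ []) (y : ℕ → A) :
    ∃ z, SeqImage f y z := by
  have hl : ∀ i, i < (apply f (factorAt y 0 (i + 1))).length := fun i => by
    have := length_le_apply hf (factorAt y 0 (i + 1))
    rw [factorAt_length] at this
    omega
  refine ⟨fun i => (apply f (factorAt y 0 (i + 1)))[i]'(hl i), fun n => ?_⟩
  rw [isPrefixSeq_iff]
  intro i hi
  rcases le_total n (i + 1) with h | h
  · exact (apply_prefix f (factorAt_prefix y h)).getElem hi
  · exact ((apply_prefix f (factorAt_prefix y h)).getElem (hl i)).symm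

/-- A sequence `z = ψ(y)` is fixed by `τ` as soon as `τ ∘ ψ = ψ ∘ σ` and `y` is fixed by `σ`. -/
lemma seqImage_of_intertwine {σ : A → List A} {y : ℕ → A} (hy : SeqImage σ y y)
    {ψ : A → List B} (hψ : ∀ c, ψ c ≠ []) {z : ℕ → B} (hz : SeqImage ψ y z)
    {τ : B → List B} (hτ : ∀ c, apply τ (ψ c) = apply ψ (σ c)) : SeqImage τ z z := by
  intro n
  have hlen := length_le_apply hψ (factorAt y 0 n)
  rw [factorAt_length] at hlen
  refine IsPrefixSeq.of_prefix ?_ (apply_prefix τ (factorAt_prefix z hlen))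
  rw [show factorAt z 0 _ = _ from hz n, apply_apply, funext hτ]
  exact hy.comp hz n

/-- If `τ ∘ ψ = ψ ∘ σ`, then `τᵐ ∘ ψ = ψ ∘ σᵐ`. -/
lemma substIter_intertwine {σ : A → List A} {ψ : A → List B} {τ : B → List B}
    (hτ : ∀ c, apply τ (ψ c) = apply ψ (σ c)) (m : ℕ) (w : List A) :
    apply (substIter τ m) (apply ψ w) = apply ψ (apply (substIter σ m) w) := by
  have key : ∀ c, apply (substIter τ m) (ψ c) = apply ψ (substIter σ m c) := by
    intro c
    induction m with
    | zero =>
      change ((ψ c).map fun c => [c]).flatten = _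
      rw [← List.flatMap_def, List.flatMap_singleton']
      exact (apply_singleton ψ c).symm
    | succ m ih =>
      change apply (fun d => apply τ (substIter τ m d)) (ψ c) = apply ψ (apply σ (substIter σ m c))
      rw [← apply_apply, ih, apply_apply, apply_apply, funext hτ]
  rw [apply_apply, apply_apply, funext key]

lemma substIter_substIter (σ : A → List A) (n m : ℕ) (c : A) :
    substIter (substIter σ n) m c = substIter σ (n * m) c := by
  induction m with
  | zero => rfl
  | succ m ih =>
    change apply (substIter σ n) (substIter (substIter σ n) m c) = _
    rw [ih, ← substIter_add, Nat.mul_succ, Nat.add_comm]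

/-- A word of length greater than `L ≥ 1` can be cut into `L` nonempty words, the first of which
has length at least two. -/
lemma exists_cut (w : List A) (L : ℕ) (hL : 0 < L) (h : L < w.length) :
    ∃ s : Fin L → List A, (∀ p, s p ≠ []) ∧ (List.ofFn s).flatten = w ∧
      2 ≤ (s ⟨0, hL⟩).length ∧ s ⟨0, hL⟩ <+: w := by
  obtain ⟨l, rfl⟩ := Nat.exists_eq_succ_of_ne_zero hL.ne'
  obtain ⟨u, v, rfl, hv⟩ : ∃ u v, w = u ++ v ∧ v.length = l :=
    ⟨w.take (w.length - l), w.drop (w.length - l), (List.take_append_drop _ _).symm, by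
      rw [List.length_drop]; omega⟩
  subst hv
  rw [List.length_append] at h
  have hu : 2 ≤ u.length := by omega
  refine ⟨Fin.cons u fun p => [v.get p], ?_, ?_, hu, List.prefix_append _ _⟩
  · intro p
    refine Fin.cases ?_ (fun p => ?_) p
    · rintro h0
      rw [Fin.cons_zero] at h0
      simp [h0] at hu
    · simp
  · have : (List.ofFn fun p => [v.get p]) = (List.ofFn v.get).map fun c => [c] := by
      rw [List.map_ofFn]; rfl
    rw [List.ofFn_succ]
    simp only [Fin.cons_zero, Fin.cons_succ, List.flatten_cons]
    rw [this, List.ofFn_get, ← List.flatMap_def, List.flatMap_singleton']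

end Words

/-! ### Primitivity in terms of words -/

lemma count_apply {A : Type*} [Fintype A] [DecidableEq A] (σ : A → List A) (w : List A) (i : A) :
    (apply σ w).count i = ∑ l, (σ l).count i * w.count l := by
  induction w with
  | nil => simp [apply_nil]
  | cons c w ih =>
    simp [apply_cons, List.count_append, ih, List.count_cons, mul_add, Finset.sum_add_distrib,
      add_comm]

/-- The powers of the incidence matrix count the letters in the iterated images. -/
lemma incMatrix_pow {A : Type*} [Fintype A] [DecidableEq A] (σ : A → List A) (k : ℕ) (i j : A) :
    (incMatrix σ ^ k) i j = (substIter σ k j).count i := by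
  induction k generalizing i with
  | zero =>
    rw [pow_zero, Matrix.one_apply, substIter, List.count_singleton]
    simp only [beq_iff_eq, eq_comm (a := i)]
  | succ k ih =>
    rw [pow_succ', Matrix.mul_apply]
    change _ = (apply σ (substIter σ k j)).count i
    rw [count_apply]
    exact Finset.sum_congr rfl fun l _ => by rw [ih]; rfl

lemma primitive_iff {A : Type*} [Fintype A] [DecidableEq A] (σ : A → List A) :
    Primitive σ ↔ ∃ k, 0 < k ∧ ∀ i j, i ∈ substIter σ k j := by
  simp only [Primitive, incMatrix_pow, List.count_pos_iff]

/-- If every `σᵏ(j)` contains every letter, so does every `σᵏᵐ(j)` with `m > 0`. -/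
lemma mem_substIter_mul {A : Type*} {σ : A → List A} {k : ℕ}
    (h : ∀ i j, i ∈ substIter σ k j) (m : ℕ) (i j : A) : i ∈ substIter σ (k * (m + 1)) j := by
  induction m generalizing i with
  | zero => simpa using h i j
  | succ m ih =>
    rw [Nat.mul_succ, Nat.add_comm, substIter_add, mem_apply]
    exact ⟨i, ih i, h i i⟩

/-! ### Nonerasing morphisms -/

/-- The statement for a nonerasing morphism `ρ`; here `k = 0` is allowed, since growth comes from
`hprol`. -/
lemma nonerasing_image_is_substitutive {A B : Type*} [Fintype A]
    (σ : A → List A) (a : A) (k : ℕ) (hk : ∀ i j, i ∈ substIter σ k j)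
    (hprol : Prolongable σ a)
    (y : ℕ → A) (hy0 : y 0 = a) (hyfix : SeqImage σ y y)
    (ρ : A → List B) (hρ : ∀ b, ρ b ≠ []) (x : ℕ → B) (hx : SeqImage ρ y x) :
    ∃ (d : ℕ) (τ : Fin d → List (Fin d)) (e : Fin d) (χ : Fin d → B) (z : ℕ → Fin d),
      Primitive τ ∧ Prolongable τ e ∧ z 0 = e ∧ SeqImage τ z z ∧
      ∀ n, x n = χ (z n) := by
  obtain ⟨⟨t, -, hσa⟩, htend⟩ := hprol
  -- Growth passes from `a` to every letter `b`, because `a` occurs in `σᵏ(b)`.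
  obtain ⟨n, hn0, hn⟩ : ∃ n, 0 < n ∧ ∀ b, (ρ b).length < (substIter σ n b).length := by
    obtain ⟨m, hm, hm0⟩ := ((htend.eventually_gt_atTop
      (Finset.univ.sup fun b => (ρ b).length)).and (Filter.eventually_gt_atTop 0)).exists
    refine ⟨m + k, by omega, fun b => ?_⟩
    rw [substIter_add]
    have h1 := length_apply_le_of_mem (substIter σ m) (hk a b)
    have h2 := Finset.le_sup (f := fun b => (ρ b).length) (Finset.mem_univ b)
    omega
  have hL : ∀ b, 0 < (ρ b).length := fun b => List.length_pos_iff.2 (hρ b)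
  choose s hs0 hsflat hs2 hspre using fun b =>
    exists_cut (substIter σ n b) (ρ b).length (hL b) (hn b)
  let E : (Σ b, Fin (ρ b).length) ≃ Fin (Fintype.card (Σ b, Fin (ρ b).length)) :=
    Fintype.equivFin _
  let ψ : A → List (Fin (Fintype.card (Σ b, Fin (ρ b).length))) :=
    fun b => List.ofFn fun p => E ⟨b, p⟩
  let τ : Fin (Fintype.card (Σ b, Fin (ρ b).length)) →
      List (Fin (Fintype.card (Σ b, Fin (ρ b).length))) :=
    fun i => apply ψ (s (E.symm i).1 (E.symm i).2)
  let χ : Fin (Fintype.card (Σ b, Fin (ρ b).length)) → B :=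
    fun i => (ρ (E.symm i).1).get (E.symm i).2
  have hτE : ∀ b p, τ (E ⟨b, p⟩) = apply ψ (s b p) := fun b p => by
    exact congrArg (fun q : Σ b, Fin (ρ b).length => apply ψ (s q.1 q.2))
      (E.symm_apply_apply ⟨b, p⟩)
  have hψlen : ∀ b, (ψ b).length = (ρ b).length := fun b => by simp [ψ]
  have hψ : ∀ b, ψ b ≠ [] := fun b => by
    rw [← List.length_pos_iff, hψlen]; exact hL b
  have hψmem : ∀ i, i ∈ ψ (E.symm i).1 := fun i => by
    simp only [ψ, List.mem_ofFn]
    exact ⟨(E.symm i).2, by simp⟩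
  have hψa : ∃ r, ψ a = E ⟨a, ⟨0, hL a⟩⟩ :: r := by
    refine ⟨(ψ a).tail, ?_⟩
    rw [← List.cons_head_tail (hψ a)]
    simp [ψ, List.head_ofFn]
  have hχψ : ∀ b, (ψ b).map χ = ρ b := fun b => by
    have : χ ∘ (fun p => E ⟨b, p⟩) = (ρ b).get := by
      funext p
      exact congrArg (fun q : Σ b, Fin (ρ b).length => (ρ q.1).get q.2)
        (E.symm_apply_apply ⟨b, p⟩)
    rw [List.map_ofFn, this, List.ofFn_get]
  have hτψ : ∀ b, apply τ (ψ b) = apply ψ (substIter σ n b) := fun b => by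
    have : τ ∘ (fun p => E ⟨b, p⟩) = apply ψ ∘ s b := by
      funext p
      exact hτE b p
    rw [← hsflat b, apply_flatten, apply, List.map_ofFn, List.map_ofFn, this]
  have hiter : ∀ m b p, substIter τ (m + 1) (E ⟨b, p⟩) =
      apply ψ (apply (substIter σ (n * m)) (s b p)) := fun m b p => by
    rw [substIter_succ_right, hτE, substIter_intertwine hτψ,
      funext (substIter_substIter σ n m)]
  obtain ⟨z, hz⟩ := exists_seqImage hψ y
  -- `σⁿ(a)` starts with `a`, hence so does its first piece `s(a,0)`.
  have hsa : ∃ r, r ≠ [] ∧ s a ⟨0, hL a⟩ = a :: r := by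
    have ha : ∀ m, ∃ r, substIter σ m a = a :: r := fun m => by
      induction m with
      | zero => exact ⟨[], rfl⟩
      | succ m ih =>
        obtain ⟨r, hr⟩ := ih
        exact ⟨t ++ apply σ r, by
          change apply σ (substIter σ m a) = _
          rw [hr, apply_cons, hσa, List.cons_append]⟩
    obtain ⟨r, hr⟩ := ha n
    have h1 := hspre a
    have h2 := hs2 a
    rw [hr] at h1
    match hsv : s a ⟨0, hL a⟩ with
    | [] => simp [hsv] at h2
    | [c] => simp [hsv] at h2
    | c :: c' :: v =>
      rw [hsv, List.cons_prefix_cons] at h1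
      exact ⟨c' :: v, by simp, by rw [h1.1]⟩
  obtain ⟨r, hr0, hr⟩ := hsa
  refine ⟨_, τ, E ⟨a, ⟨0, hL a⟩⟩, χ, z, ?_, ⟨?_, ?_⟩, ?_, ?_, ?_⟩
  · rw [primitive_iff]
    refine ⟨k + 1, by omega, fun i j => ?_⟩
    obtain ⟨⟨b, p⟩, rfl⟩ := E.surjective j
    rw [hiter, mem_apply]
    refine ⟨(E.symm i).1, ?_, hψmem i⟩
    obtain ⟨c, hc⟩ := List.exists_mem_of_ne_nil _ (hs0 b p)
    obtain ⟨n', rfl⟩ := Nat.exists_eq_add_of_lt hn0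
    rw [mem_apply, Nat.zero_add, Nat.mul_comm]
    exact ⟨c, hc, mem_substIter_mul hk n' _ _⟩
  · obtain ⟨q, hq⟩ := hψa
    refine ⟨q ++ apply ψ r, ?_, ?_⟩
    · have h1 := length_le_apply hψ r
      have h2 := List.length_pos_iff.2 hr0
      rw [← List.length_pos_iff, List.length_append]
      omega
    · rw [hτE, hr, apply_cons, hq, List.cons_append]
  · rw [← Filter.tendsto_add_atTop_iff_nat 1]
    have h1 : Filter.Tendsto (fun m : ℕ => n * m) Filter.atTop Filter.atTop :=
      Filter.tendsto_id.const_mul_atTop' hn0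
    refine Filter.tendsto_atTop_mono (fun m => ?_) (htend.comp h1)
    rw [hiter]
    refine le_trans ?_ (length_le_apply hψ _)
    exact length_apply_le_of_mem (substIter σ (n * m)) (by rw [hr]; exact List.mem_cons_self)
  · obtain ⟨q, hq⟩ := hψa
    have h1 := hz 1
    have : factorAt y 0 1 = [a] := by simp [factorAt, hy0]
    rw [this, apply_singleton, hq, isPrefixSeq_iff] at h1
    exact (h1 0 (by simp)).symm
  · exact seqImage_of_intertwine (hyfix.substIter n) hψ hz hτψ
  · intro i
    have h1 := isPrefixSeq_iff.1 (hz (i + 1))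
    have h2 := isPrefixSeq_iff.1 (hx (i + 1))
    have h3 : apply ρ (factorAt y 0 (i + 1)) = (apply ψ (factorAt y 0 (i + 1))).map χ := by
      simp only [apply, List.map_flatten, List.map_map]
      congr 2
      funext b
      exact (hχψ b).symm
    have hlen := length_le_apply hψ (factorAt y 0 (i + 1))
    rw [factorAt_length] at hlen
    rw [← h1 i (by omega), ← h2 i (by rw [h3, List.length_map]; omega)]
    simp only [h3, List.getElem_map]

/-- A morphic sequence w.r.t. a primitive substitution is substitutive
w.r.t. a primitive substitution: if `y = σ^ω(a)` with `σ` primitive and `x = ρ(y)`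
is an infinite sequence, then there are a finite alphabet `D` (modelled as `Fin d`),
a primitive substitution `τ` on `D` prolongable on a letter `e`, and a coding
`χ : D* → B*` with `x = χ(τ^ω(e))`. -/
theorem morphic_image_is_substitutive {A B : Type*} [Fintype A] [DecidableEq A]
    (σ : A → List A) (a : A) (hprim : Primitive σ) (hprol : Prolongable σ a)
    (y : ℕ → A) (hy0 : y 0 = a) (hyfix : SeqImage σ y y)
    (ρ : A → List B) (x : ℕ → B) (hx : SeqImage ρ y x)
    (hinf : ∀ m : ℕ, ∃ n : ℕ, m ≤ (apply ρ (factorAt y 0 n)).length) :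
    ∃ (d : ℕ) (τ : Fin d → List (Fin d)) (e : Fin d) (χ : Fin d → B) (z : ℕ → Fin d),
      Primitive τ ∧ Prolongable τ e ∧ z 0 = e ∧ SeqImage τ z z ∧
      ∀ n, x n = χ (z n) := by
  obtain ⟨k, -, hk⟩ := (primitive_iff σ).1 hprim
  obtain ⟨c, hc⟩ : ∃ c, ρ c ≠ [] := by
    by_contra! h
    obtain ⟨n, hn⟩ := hinf 1
    rw [Nat.one_le_iff_ne_zero, Ne, List.length_eq_zero_iff] at hn
    exact hn (List.flatten_eq_nil_iff.2 (by simp [h]))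
  obtain ⟨l, hl⟩ := List.exists_mem_of_ne_nil _ hc
  exact nonerasing_image_is_substitutive σ a k hk hprol y hy0 hyfix
    (fun b => apply ρ (substIter σ k b))
    (fun b => List.ne_nil_of_mem (mem_apply.2 ⟨c, hk c b, hl⟩)) x ((hyfix.substIter k).comp hx)
end Rauzy
end

section
/- Let σ and τ be primitive substitutions on an alphabet A with d letters, both prolongable on the letter a, with fixed points x = σ^ω(a) and y = τ^ω(a). Suppose x and y have a common nonempty prefix u such that: (1) σ(w) = τ(w) for every return word w ∈ ℛ_{x,u}; and (2) the set of Parikh vectors { V(w) : w ∈ ℛ_{x,u} } generates ℤ^d as a group. Then σ = τ. -/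
/-!
Counting letters shows that `|σ(w)| = ∑ b, |w|_b |σ(b)|`, a homomorphism in the Parikh vector of `w`.
Since `σ` and `τ` agree on the return words, whose Parikh vectors generate `ℤ^d`, the two length
homomorphisms coincide, so `|σ(b)| = |τ(b)|` for every letter `b`. The generation hypothesis also
forces every letter `b` to occur in some return word `w = p b s`. In the equality `σ(w) = τ(w)` the
images of `p` have the same length, and so do those of `b`, so comparing blocks gives `σ(b) = τ(b)`.
-/

namespace Rauzy

variable {A B Γ : Type*}

/-- The homomorphism `v ↦ ∑ b, v_b |f(b)|`, which sends the Parikh vector of a word `w` to the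
length of `f(w)`. -/
def lengthHom {A : Type*} [Fintype A] (f : A → List A) : (A → ℤ) →+ ℤ where
  toFun v := ∑ b, v b * ((f b).length : ℤ)
  map_zero' := by simp
  map_add' v w := by simp [add_mul, Finset.sum_add_distrib]

theorem lengthHom_single {A : Type*} [Fintype A] [DecidableEq A] (f : A → List A) (b : A) :
    lengthHom f (Pi.single b 1) = (f b).length := by
  simp [lengthHom, Pi.single_apply]

theorem lengthHom_parikh {A : Type*} [Fintype A] [DecidableEq A] (f : A → List A) (w : List A) :
    lengthHom f (parikh w) = (apply f w).length := by
  induction w with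
  | nil => simp [lengthHom, parikh, apply]
  | cons c w ih =>
    have h : parikh (c :: w) = Pi.single c 1 + parikh w := by
      ext b
      by_cases hb : c = b
      · subst hb
        simp [parikh, add_comm]
      · simp [parikh, List.count_cons_of_ne hb, Pi.single_eq_of_ne (Ne.symm hb)]
    rw [h, map_add, ih, lengthHom_single]
    simp [apply]

theorem exists_mem_of_closure_parikh_eq_top {A : Type*} [DecidableEq A] (R : Set (List A))
    (h : AddSubgroup.closure (parikh '' R) = (⊤ : AddSubgroup (A → ℤ))) (b : A) :
    ∃ w ∈ R, b ∈ w := by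
  by_contra! hb
  -- Otherwise the coordinate `b` vanishes on all the generators, hence everywhere.
  have he : Pi.evalAddMonoidHom (fun _ : A => ℤ) b = 0 := by
    refine AddMonoidHom.eq_of_eqOn_dense h ?_
    rintro _ ⟨w, hw, rfl⟩
    simp [parikh, List.count_eq_zero_of_not_mem (hb w hw)]
  simpa using DFunLike.congr_fun he (Pi.single b 1)

/-- Let `σ` and `τ` be primitive substitutions on a `d`-letter alphabet,
both prolongable on `a`, with fixed points `x = σ^ω(a)` and `y = τ^ω(a)`. If `x` and
`y` have a common nonempty prefix `u` such that (1) `σ(w) = τ(w)` for every return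
word `w ∈ ℛ_{x,u}`, and (2) the Parikh vectors of the return words to `u` generate
`ℤ^d`, then `σ = τ`. -/
theorem equal_substitutions_from_return_words {A : Type*} [Fintype A] [DecidableEq A]
    (σ τ : A → List A) (a : A)
    (hσ : Primitive σ) (hτ : Primitive τ)
    (hσa : Prolongable σ a) (hτa : Prolongable τ a)
    (x : ℕ → A) (hx0 : x 0 = a) (hxfix : SeqImage σ x x)
    (y : ℕ → A) (hy0 : y 0 = a) (hyfix : SeqImage τ y y)
    (u : List A) (hu : u ≠ []) (hpx : IsPrefixSeq x u) (hpy : IsPrefixSeq y u)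
    (h1 : ∀ w ∈ returnWords x u, apply σ w = apply τ w)
    (h2 : AddSubgroup.closure (parikh '' returnWords x u) = (⊤ : AddSubgroup (A → ℤ))) :
    σ = τ := by
  have hhom : lengthHom σ = lengthHom τ := by
    refine AddMonoidHom.eq_of_eqOn_dense h2 ?_
    rintro _ ⟨w, hw, rfl⟩
    rw [lengthHom_parikh, lengthHom_parikh, h1 w hw]
  have hlen (w : List A) : (apply σ w).length = (apply τ w).length := by
    have := DFunLike.congr_fun hhom (parikh w)
    rw [lengthHom_parikh, lengthHom_parikh] at this
    exact_mod_cast this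
  funext b
  obtain ⟨w, hw, hbw⟩ := exists_mem_of_closure_parikh_eq_top _ h2 b
  obtain ⟨p, s, rfl⟩ := List.append_of_mem hbw
  have heq := h1 _ hw
  have hp := hlen p
  have hb := hlen [b]
  simp only [apply, List.map_append, List.map_cons, List.map_nil, List.flatten_append,
    List.flatten_cons, List.flatten_nil, List.append_nil] at heq hp hb
  exact (List.append_inj (List.append_inj heq hp).2 hb).1
end Rauzy
end

section
/- Let σ and τ be primitive substitutions on an alphabet A with d letters, both prolongable on the letter a, sharing the same non-periodic fixed point x = σ^ω(a) = τ^ω(a). Suppose u is a nonempty prefix of x and i, j are positive integers such that τ^i(w) = σ^j(w) for every return word w ∈ ℛ_{x,u}, and suppose the set of Parikh vectors { V(w) : w ∈ ℛ_{x,u} } generates ℤ^d as a group. Then τ^i = σ^j. -/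
/-!
Write `f = τ^i` and `g = σ^j`. The length of `f(w)` depends only on the Parikh vector of `w`, and
additively so. Hence `v ↦ ∑ b, v b * (|f(b)| - |g(b)|)` is a homomorphism `ℤ^d → ℤ` that vanishes on
the Parikh vectors of the return words; these generate `ℤ^d`, so `|f(b)| = |g(b)|` for every letter
`b`. The same generation property forces every letter to occur in `x`. If `p b` is a prefix of `x`,
then `f(p)f(b)` and `g(p)g(b)` are both prefixes of `x`, and `|f(p)| = |g(p)|`,
`|f(b)| = |g(b)|`, so `f(b) = g(b)`.
-/

namespace Rauzy

variable {A B Γ : Type*}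

theorem apply_iterate_append (f : A → List A) (n : ℕ) (v w : List A) :
    (apply f)^[n] (v ++ w) = (apply f)^[n] v ++ (apply f)^[n] w := by
  induction n generalizing v w with
  | zero => rfl
  | succ n ih =>
    have h : apply f (v ++ w) = apply f v ++ apply f w := by simp [apply]
    simp only [Function.iterate_succ_apply, h, ih]

theorem apply_iterate_nil (f : A → List A) (n : ℕ) : (apply f)^[n] [] = [] :=
  Function.iterate_fixed rfl n

/-- The length of the image of `w` is a linear function of the Parikh vector of `w`. -/
theorem length_apply_iterate [Fintype A] [DecidableEq A] (f : A → List A) (n : ℕ) (w : List A) :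
    (((apply f)^[n] w).length : ℤ) = ∑ b, parikh w b * (((apply f)^[n] [b]).length : ℤ) := by
  induction w with
  | nil => simp [apply_iterate_nil, parikh]
  | cons c w ih =>
    rw [← List.singleton_append, apply_iterate_append, List.length_append]
    push_cast
    rw [ih]
    simp [parikh, List.count_cons, add_mul, Finset.sum_add_distrib, add_comm]

theorem isPrefixSeq_apply_iterate {f : A → List A} {x : ℕ → A} (hf : SeqImage f x x) (n : ℕ)
    {w : List A} (hw : IsPrefixSeq x w) : IsPrefixSeq x ((apply f)^[n] w) := by
  induction n generalizing w with
  | zero => exact hw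
  | succ n ih =>
    rw [Function.iterate_succ_apply]
    apply ih
    have h := hf w.length
    rwa [show factorAt x 0 w.length = w from hw] at h

theorem isPrefixSeq_factorAt (x : ℕ → A) (n : ℕ) : IsPrefixSeq x (factorAt x 0 n) := by
  simp [IsPrefixSeq, OccursAt, factorAt]

theorem IsPrefixSeq.eq_of_length {x : ℕ → A} {v w : List A} (hv : IsPrefixSeq x v)
    (hw : IsPrefixSeq x w) (h : v.length = w.length) : v = w :=
  hv.symm.trans ((congrArg (factorAt x 0) h).trans hw)

/-- If the Parikh vectors of the return words generate `ℤ^d`, no coordinate vanishes on all of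
them, so every letter occurs in `x`. -/
theorem exists_eq_of_closure_parikh [DecidableEq A] {x : ℕ → A} {u : List A}
    (h : AddSubgroup.closure (parikh '' returnWords x u) = (⊤ : AddSubgroup (A → ℤ))) (b : A) :
    ∃ n, x n = b := by
  by_contra! hb
  have hle : AddSubgroup.closure (parikh '' returnWords x u) ≤
      (Pi.evalAddMonoidHom (fun _ : A => ℤ) b).ker := by
    rw [AddSubgroup.closure_le]
    rintro _ ⟨w, ⟨k, l, -, rfl⟩, rfl⟩
    have : List.count b (factorAt x k (l - k)) = 0 := by
      rw [List.count_eq_zero]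
      simp [factorAt, hb]
    simpa [parikh, AddMonoidHom.mem_ker] using this
  have h1 := hle (h ▸ AddSubgroup.mem_top (Pi.single b 1 : A → ℤ))
  simp [AddMonoidHom.mem_ker] at h1

/-- Let `σ` and `τ` be primitive substitutions on a `d`-letter alphabet,
both prolongable on `a`, sharing the same non-periodic fixed point
`x = σ^ω(a) = τ^ω(a)`. If `u` is a nonempty prefix of `x` and `i`, `j` are positive
integers with `τ^i(w) = σ^j(w)` for every return word `w ∈ ℛ_{x,u}`, and the Parikh
vectors of the return words to `u` generate `ℤ^d`, then `τ^i = σ^j`. -/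
theorem powers_equal_from_return_words {A : Type*} [Fintype A] [DecidableEq A]
    (σ τ : A → List A) (a : A)
    (hσ : Primitive σ) (hτ : Primitive τ)
    (hσa : Prolongable σ a) (hτa : Prolongable τ a)
    (x : ℕ → A) (hx0 : x 0 = a) (hxfixσ : SeqImage σ x x) (hxfixτ : SeqImage τ x x)
    (hnp : ¬ IsUltimatelyPeriodic x)
    (u : List A) (hu : u ≠ []) (hpu : IsPrefixSeq x u)
    (i j : ℕ) (hi : 0 < i) (hj : 0 < j)
    (h1 : ∀ w ∈ returnWords x u, (apply τ)^[i] w = (apply σ)^[j] w)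
    (h2 : AddSubgroup.closure (parikh '' returnWords x u) = (⊤ : AddSubgroup (A → ℤ))) :
    ∀ b : A, (apply τ)^[i] [b] = (apply σ)^[j] [b] := by
  have hlen : ∀ b, ((apply τ)^[i] [b]).length = ((apply σ)^[j] [b]).length := by
    intro b
    let D : (A → ℤ) →+ ℤ :=
      { toFun := fun v => ∑ c, v c *
          ((((apply τ)^[i] [c]).length : ℤ) - (((apply σ)^[j] [c]).length : ℤ))
        map_zero' := by simp
        map_add' := fun v w => by simp [add_mul, Finset.sum_add_distrib] }
    have hle : AddSubgroup.closure (parikh '' returnWords x u) ≤ D.ker := by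
      rw [AddSubgroup.closure_le]
      rintro _ ⟨w, hw, rfl⟩
      change ∑ c, parikh w c *
          ((((apply τ)^[i] [c]).length : ℤ) - (((apply σ)^[j] [c]).length : ℤ)) = 0
      simp only [mul_sub, Finset.sum_sub_distrib]
      rw [← length_apply_iterate, ← length_apply_iterate, h1 w hw, sub_self]
    have hD : ∑ c, (Pi.single b 1 : A → ℤ) c *
          ((((apply τ)^[i] [c]).length : ℤ) - (((apply σ)^[j] [c]).length : ℤ)) = 0 :=
      hle (h2 ▸ AddSubgroup.mem_top (Pi.single b 1 : A → ℤ))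
    simp [Pi.single_apply] at hD
    omega
  have hlen' : ∀ w, ((apply τ)^[i] w).length = ((apply σ)^[j] w).length := by
    intro w
    have h := length_apply_iterate τ i w
    simp only [hlen] at h
    rw [← length_apply_iterate] at h
    exact_mod_cast h
  intro b
  obtain ⟨n, rfl⟩ := exists_eq_of_closure_parikh h2 b
  have hp := isPrefixSeq_factorAt x (n + 1)
  have heq := (isPrefixSeq_apply_iterate hxfixτ i hp).eq_of_length
    (isPrefixSeq_apply_iterate hxfixσ j hp) (hlen' _)
  have hsplit : factorAt x 0 (n + 1) = factorAt x 0 n ++ [x n] := by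
    simp [factorAt, List.range_succ]
  rw [hsplit, apply_iterate_append, apply_iterate_append] at heq
  exact (List.append_inj heq (hlen' _)).2
end Rauzy
end

section
/- Let z be a periodic sequence with length period L (that is, z = v v v ⋯ for some nonempty word v with |v| = L). If u is a factor of z with |u| > L, then u has exactly one return word in z: #ℛ_{z,u} = 1. -/
/-!
Two occurrences `i`, `j` of a word `u` with `|u| ≥ L` force the tails of `z` from `i` and from `j`
to coincide: they agree on a full period and both have period `L` (`tail_eq_of_occursAt`).
Occurrences of `u` after `i` and after `j` therefore sit at the same offsets, so every occurrence is
followed by the same return word. A return word exists because an occurrence at `i`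
repeats at `i + L`.
-/

namespace Rauzy

variable {A B Γ : Type*}

lemma occursAt_iff {A : Type*} (z : ℕ → A) (u : List A) (i : ℕ) :
    OccursAt z u i ↔ ∀ k (h : k < u.length), z (i + k) = u[k] := by
  unfold OccursAt factorAt
  constructor
  · intro h k hk
    have h2 := List.getElem_of_eq h.symm hk
    simpa using h2.symm
  · intro h
    apply List.ext_getElem (by simp)
    intro k h1 h2
    simpa using h k h2

/-- A tail of an `L`-periodic sequence is determined by any word of length at least `L`
occurring at its start. -/
lemma tail_eq_of_occursAt {A : Type*} {z : ℕ → A} {L : ℕ} (hL : 0 < L)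
    (hper : ∀ n, z (n + L) = z n) {u : List A} (hlen : L ≤ u.length) {i j : ℕ}
    (hi : OccursAt z u i) (hj : OccursAt z u j) (k : ℕ) : z (i + k) = z (j + k) := by
  rw [occursAt_iff] at hi hj
  induction k using Nat.strong_induction_on with
  | _ k ih =>
    by_cases hk : k < L
    · rw [hi k (by omega), hj k (by omega)]
    · have h := ih (k - L) (by omega)
      rw [← hper (i + (k - L)), ← hper (j + (k - L))] at h
      rwa [show i + (k - L) + L = i + k by omega, show j + (k - L) + L = j + k by omega] at h

lemma occursAt_congr {A : Type*} {z : ℕ → A} {i j : ℕ}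
    (h : ∀ k, z (i + k) = z (j + k)) (u : List A) (d : ℕ) :
    OccursAt z u (i + d) ↔ OccursAt z u (j + d) := by
  simp only [occursAt_iff, Nat.add_assoc, h]

/-- If `z` is a periodic sequence with length period `L` (i.e.
`z = v^ω` with `|v| = L ≥ 1`) and `u` is a factor of `z` with `|u| > L`, then `u`
has exactly one return word in `z`. -/
theorem periodic_unique_return_word {A : Type*} (z : ℕ → A) (L : ℕ) (hL : 0 < L)
    (hper : ∀ n, z (n + L) = z n)
    (u : List A) (hu : IsFactor z u) (hlen : L < u.length) :
    (returnWords z u).ncard = 1 := by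
  have uniq : ∀ v w, IsReturnWord z u v → IsReturnWord z u w → v = w := by
    rintro v w ⟨i, j, ⟨hij, hi, hj, hn⟩, rfl⟩ ⟨i', j', ⟨hij', hi', hj', hn'⟩, rfl⟩
    have ht := tail_eq_of_occursAt hL hper hlen.le hi hi'
    have h1 : OccursAt z u (i' + (j - i)) := by
      rw [← occursAt_congr ht, show i + (j - i) = j by omega]
      exact hj
    have h2 : OccursAt z u (i + (j' - i')) := by
      rw [occursAt_congr ht, show i' + (j' - i') = j' by omega]
      exact hj'
    have hd : j - i = j' - i' := by
      rcases lt_trichotomy (j - i) (j' - i') with hlt | heq | hlt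
      · exact absurd h1 (hn' _ (by omega) (by omega))
      · exact heq
      · exact absurd h2 (hn _ (by omega) (by omega))
    simp only [factorAt, hd, ht]
  have ex : ∃ w, IsReturnWord z u w := by
    classical
    obtain ⟨i, hi⟩ := hu
    have hper' : ∃ j, i < j ∧ OccursAt z u j := by
      refine ⟨i + L, by omega, ?_⟩
      have hs : ∀ k, z (i + L + k) = z (i + k) := fun k => by
        rw [Nat.add_right_comm, hper]
      exact (occursAt_congr hs u 0).2 hi
    obtain ⟨hlt, hocc⟩ := Nat.find_spec hper'
    exact ⟨_, i, Nat.find hper',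
      ⟨hlt, hi, hocc, fun k hk hkj h => Nat.find_min hper' hkj ⟨hk, h⟩⟩, rfl⟩
  obtain ⟨w, hw⟩ := ex
  rw [Set.ncard_eq_one]
  exact ⟨w, Set.eq_singleton_iff_unique_mem.2 ⟨hw, fun v hv => uniq v w hv hw⟩⟩
end Rauzy
end
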